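/- arXiv:2601.17261 — 2 statements merged into one kernel-verified Lean document; each statement's English description precedes it below -/
import Mathlib

section
/- Let L, and for each layer ℓ ∈ {1,…,L}, dimensions d_out(ℓ), d_in(ℓ), r(ℓ) be positive integers, and let A_ℓ ∈ ℝ^{d_in(ℓ)×r(ℓ)} have orthonormal columns (A_ℓᵀA_ℓ = I). Let f be a differentiable function on the product parameter space with Lip-Lipschitz gradient, let μ > 0, and let W be a point of the parameter space. Then the subspace-smoothed objective f_{μ,A} is differentiable at W and, for every layer ℓ, ∇_{W_ℓ} f_{μ,A}(W) · A_ℓA_ℓᵀ = (1/μ) · E_R[ f(W + μΔ(R)) · R_ℓA_ℓᵀ ], where ∇_{W_ℓ} denotes the block of the gradient corresponding to layer ℓ. -/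
open MeasureTheory ProbabilityTheory Matrix

attribute [local instance] Matrix.frobeniusNormedAddCommGroup Matrix.frobeniusNormedSpace
attribute [-instance] instTopologicalSpaceMatrix Matrix.instUniformSpace

noncomputable section

/-- Entrywise expectation of a matrix-valued function. -/
def matExp {Ω : Type*} [MeasurableSpace Ω] (P : Measure Ω)
    {ι κ : Type*} (F : Ω → Matrix ι κ ℝ) : Matrix ι κ ℝ :=
  Matrix.of fun i j => ∫ ω, F ω i j ∂P

variable {L : ℕ} {dout din r : Fin L → ℕ}

/-- The block of the (Frobenius) gradient of `f` corresponding to layer `ℓ`: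
its `(i,j)` entry is the partial derivative of `f` in the direction of the
standard basis matrix `E_{ij}` of layer `ℓ`. -/
def gradBlock (f : ((ℓ : Fin L) → Matrix (Fin (dout ℓ)) (Fin (din ℓ)) ℝ) → ℝ)
    (W : (ℓ : Fin L) → Matrix (Fin (dout ℓ)) (Fin (din ℓ)) ℝ) (ℓ : Fin L) :
    Matrix (Fin (dout ℓ)) (Fin (din ℓ)) ℝ :=
  Matrix.of fun i j => fderiv ℝ f W (Pi.single ℓ (Matrix.single i j 1))

/-- The product of standard Gaussian measures over all entries of all blocks
`R_ℓ ∈ ℝ^{dout(ℓ) × r(ℓ)}` (i.i.d. standard Gaussian entries). -/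
def gaussBlocks (dout r : Fin L → ℕ) :
    Measure ((ℓ : Fin L) → Fin (dout ℓ) → Fin (r ℓ) → ℝ) :=
  Measure.pi fun _ => Measure.pi fun _ => Measure.pi fun _ => gaussianReal 0 1

/-- The AGZO perturbation `Δ(R) = (R₁A₁ᵀ, …, R_L A_Lᵀ)`. -/
def perturbA (A : (ℓ : Fin L) → Matrix (Fin (din ℓ)) (Fin (r ℓ)) ℝ)
    (R : (ℓ : Fin L) → Fin (dout ℓ) → Fin (r ℓ) → ℝ) :
    (ℓ : Fin L) → Matrix (Fin (dout ℓ)) (Fin (din ℓ)) ℝ :=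
  fun ℓ => Matrix.of (R ℓ) * (A ℓ)ᵀ

/-- The subspace-smoothed objective `f_{μ,A}(W) = E_R[f(W + μΔ(R))]`. -/
def smoothedA (f : ((ℓ : Fin L) → Matrix (Fin (dout ℓ)) (Fin (din ℓ)) ℝ) → ℝ)
    (μ : ℝ) (A : (ℓ : Fin L) → Matrix (Fin (din ℓ)) (Fin (r ℓ)) ℝ)
    (W : (ℓ : Fin L) → Matrix (Fin (dout ℓ)) (Fin (din ℓ)) ℝ) : ℝ :=
  ∫ R, f (W + μ • perturbA A R) ∂(gaussBlocks dout r)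


/-- The Stein identity for a measure in a direction `e` with coordinate `φ`. -/
def SteinProp {X : Type*} [MeasurableSpace X] [AddCommGroup X] [Module ℝ X]
    (ν : Measure X) (e : X) (φ : X → ℝ) : Prop :=
  ∀ g g' : X → ℝ, (∀ x, HasDerivAt (fun t : ℝ => g (x + t • e)) (g' x) 0) →
    Integrable g ν → Integrable g' ν → Integrable (fun x => g x * φ x) ν →
    ∫ x, g x * φ x ∂ν = ∫ x, g' x ∂ν

lemma hasDerivAt_gaussPDF (x : ℝ) :
    HasDerivAt (gaussianPDFReal 0 1) (- (x * gaussianPDFReal 0 1 x)) x := by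
  unfold gaussianPDFReal
  have h1 : HasDerivAt (fun x : ℝ => -(x - 0) ^ 2 / (2 * ((1 : NNReal) : ℝ))) (-x) x := by
    have := ((((hasDerivAt_id x).sub_const 0).pow 2).neg).div_const (2 * ((1 : NNReal) : ℝ))
    refine this.congr_deriv ?_
    simp only [id, NNReal.coe_one]
    norm_num
    ring
  have := (h1.exp).const_mul (√(2 * Real.pi * ((1 : NNReal) : ℝ)))⁻¹
  refine this.congr_deriv ?_
  ring

lemma integrable_gauss_iff (g : ℝ → ℝ) :
    Integrable g (gaussianReal 0 1) ↔ Integrable (fun x => g x * gaussianPDFReal 0 1 x) := by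
  rw [gaussianReal_of_var_ne_zero 0 one_ne_zero,
    integrable_withDensity_iff (measurable_gaussianPDF 0 1) (by simp [gaussianPDF])]
  simp [gaussianPDF, ENNReal.toReal_ofReal, gaussianPDFReal_nonneg]

lemma stein_real : SteinProp (gaussianReal 0 1) (1 : ℝ) (fun x => x) := by
  intro g g' hg h1 h2 h3
  rw [integrable_gauss_iff] at h1 h2 h3
  rw [integral_gaussianReal_eq_integral_smul one_ne_zero,
    integral_gaussianReal_eq_integral_smul one_ne_zero]
  have hg' : ∀ x, HasDerivAt g (g' x) x := by
    intro x
    have h0 := hg x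
    have h4 : HasDerivAt (fun y : ℝ => y - x) 1 x := (hasDerivAt_id x).sub_const x
    have h5 : HasDerivAt (fun t : ℝ => g (x + t • 1)) (g' x) (x - x) := by simpa using h0
    have := HasDerivAt.comp (h₂ := fun t : ℝ => g (x + t • 1)) (h := fun y : ℝ => y - x) x h5 h4
    simpa [Function.comp_def] using this
  have key := integral_mul_deriv_eq_deriv_mul_of_integrable (u := g) (u' := g')
    (v := gaussianPDFReal 0 1) (v' := fun x => - (x * gaussianPDFReal 0 1 x))
    (fun x _ => hg' x) (fun x _ => hasDerivAt_gaussPDF x)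
    (by
      refine h3.neg.congr (Filter.Eventually.of_forall fun x => ?_)
      simp
      ring) h2 h1
  have e1 : ∫ x, gaussianPDFReal 0 1 x • (g x * x)
      = - ∫ x, g x * - (x * gaussianPDFReal 0 1 x) := by
    rw [← integral_neg]
    refine integral_congr_ae (Filter.Eventually.of_forall fun x => ?_)
    simp
    ring
  rw [e1, key, neg_neg]
  refine integral_congr_ae (Filter.Eventually.of_forall fun x => ?_)
  simp
  ring

lemma measurePreserving_update {ι : Type*} [Fintype ι] [DecidableEq ι] {X : ι → Type*}
    [∀ i, MeasurableSpace (X i)] (ν : ∀ i, Measure (X i)) [∀ i, IsProbabilityMeasure (ν i)]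
    (i : ι) :
    MeasurePreserving (fun p : (∀ i, X i) × X i => Function.update p.1 i p.2)
      ((Measure.pi ν).prod (ν i)) (Measure.pi ν) := by
  have hm : Measurable (fun p : (∀ i, X i) × X i => Function.update p.1 i p.2) := by
    rw [measurable_pi_iff]
    intro j
    by_cases h : j = i
    · subst h
      simpa using measurable_snd
    · simp only [Function.update_of_ne h]
      exact (measurable_pi_apply j).comp measurable_fst
  refine ⟨hm, ?_⟩
  symm
  refine Measure.pi_eq fun s hs => ?_
  rw [Measure.map_apply hm (MeasurableSet.univ_pi hs)]
  have : (fun p : (∀ i, X i) × X i => Function.update p.1 i p.2) ⁻¹' (Set.univ.pi s)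
      = (Set.univ.pi (Function.update s i Set.univ)) ×ˢ (s i) := by
    ext ⟨x, y⟩
    simp only [Set.mem_preimage, Set.mem_pi, Set.mem_univ, true_imp_iff, Set.mem_prod]
    constructor
    · intro h
      refine ⟨fun j => ?_, by simpa using h i⟩
      by_cases hj : j = i
      · subst hj
        simp
      · simpa [Function.update_of_ne hj] using h j
    · rintro ⟨h, hy⟩ j
      by_cases hj : j = i
      · subst hj
        simpa using hy
      · simpa [Function.update_of_ne hj] using h j
  rw [this, Measure.prod_prod, Measure.pi_pi, ← Finset.mul_prod_erase _ _ (Finset.mem_univ i),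
    ← Finset.mul_prod_erase _ (fun j => ν j (s j)) (Finset.mem_univ i)]
  simp only [Function.update_self, measure_univ, one_mul]
  rw [mul_comm]
  congr 1
  refine Finset.prod_congr rfl fun j hj => ?_
  rw [Function.update_of_ne (Finset.ne_of_mem_erase hj)]

lemma stein_pi {ι : Type*} [Fintype ι] [DecidableEq ι] {X : ι → Type*}
    [∀ i, MeasurableSpace (X i)] [∀ i, AddCommGroup (X i)] [∀ i, Module ℝ (X i)]
    (ν : ∀ i, Measure (X i)) [∀ i, IsProbabilityMeasure (ν i)]
    (i : ι) (e : X i) (φ : X i → ℝ) (h : SteinProp (ν i) e φ) :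
    SteinProp (Measure.pi ν) (Pi.single i e) (fun x => φ (x i)) := by
  intro g g' hg h1 h2 h3
  have hmp := measurePreserving_update ν i
  have i1 := hmp.integrable_comp_of_integrable h1
  have i2 := hmp.integrable_comp_of_integrable h2
  have i3 := hmp.integrable_comp_of_integrable h3
  have c : ∀ G : (∀ i, X i) → ℝ, Integrable G (Measure.pi ν) →
      ∫ x, G x ∂(Measure.pi ν)
        = ∫ x, ∫ y, G (Function.update x i y) ∂(ν i) ∂(Measure.pi ν) := by
    intro G hG
    have iG := hmp.integrable_comp_of_integrable hG
    have := integral_prod _ iG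
    simp only [Function.comp_def] at this
    rw [← this]
    have hG' := hG.aestronglyMeasurable
    rw [← hmp.map_eq] at hG'
    rw [← integral_map hmp.measurable.aemeasurable hG', hmp.map_eq]
  rw [c _ h3, c _ h2]
  refine integral_congr_ae ?_
  filter_upwards [i1.prod_right_ae, i2.prod_right_ae, i3.prod_right_ae] with x a1 a2 a3
  simp only [Function.comp_def, Function.update_self] at a1 a2 a3
  simp only [Function.update_self]
  refine h (fun y => g (Function.update x i y)) (fun y => g' (Function.update x i y)) ?_ a1 a2 a3
  intro y
  have := hg (Function.update x i y)
  convert this using 3 with t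
  ext j
  by_cases hj : j = i
  · subst hj
    simp
  · simp [Function.update_of_ne hj, Pi.single_eq_of_ne hj]

lemma stein_gaussBlocks (dout r : Fin L → ℕ) (ℓ : Fin L) (i : Fin (dout ℓ)) (k : Fin (r ℓ)) :
    SteinProp (gaussBlocks dout r) (Pi.single ℓ (Pi.single i (Pi.single k (1 : ℝ))))
      (fun R => R ℓ i k) := by
  unfold gaussBlocks
  exact stein_pi (fun ℓ : Fin L => Measure.pi fun _ : Fin (dout ℓ) =>
      Measure.pi fun _ : Fin (r ℓ) => gaussianReal 0 1) ℓ _ (fun x => x i k)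
    (stein_pi (fun _ : Fin (dout ℓ) => Measure.pi fun _ : Fin (r ℓ) => gaussianReal 0 1) i _
      (fun x => x k) (stein_pi (fun _ : Fin (r ℓ) => gaussianReal 0 1) k _ _ stein_real))

instance isProb_gaussBlocks (dout r : Fin L → ℕ) : IsProbabilityMeasure (gaussBlocks dout r) := by
  unfold gaussBlocks
  infer_instance

lemma memLp_pi_id {ι : Type*} [Fintype ι] {X : ι → Type*}
    [∀ i, MeasurableSpace (X i)] [∀ i, NormedAddCommGroup (X i)]
    (ν : ∀ i, Measure (X i)) [∀ i, IsProbabilityMeasure (ν i)] (p : ENNReal)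
    (h : ∀ i, MemLp id p (ν i)) : MemLp id p (Measure.pi ν) := by
  refine MemLp.of_eval fun i => ?_
  exact (h i).comp_measurePreserving (measurePreserving_eval ν i)

lemma memLp_gaussBlocks (dout r : Fin L → ℕ) : MemLp id 3 (gaussBlocks dout r) := by
  unfold gaussBlocks
  refine memLp_pi_id _ _ fun _ => memLp_pi_id _ _ fun _ => memLp_pi_id _ _ fun _ => ?_
  exact memLp_id_gaussianReal' 3 (by simp)

lemma one_le_three_ennreal : (1 : ENNReal) ≤ 3 := by
  exact_mod_cast (by norm_num : (1 : ℕ) ≤ 3)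
lemma moments1 {Ω : Type*} [NormedAddCommGroup Ω] [MeasurableSpace Ω]
    (P : Measure Ω) [IsProbabilityMeasure P] (hP : MemLp id 3 P) :
    MemLp (fun R : Ω => 1 + ‖R‖) 3 P := by
  have h1 : MemLp (fun _ : Ω => (1 : ℝ)) 3 P := memLp_const 1
  have h2 : MemLp (fun R : Ω => ‖R‖) 3 P := hP.norm
  exact h1.add h2
lemma moments2 {Ω : Type*} [NormedAddCommGroup Ω] [MeasurableSpace Ω]
    (P : Measure Ω) [IsProbabilityMeasure P] (hP : MemLp id 3 P) :
    Integrable (fun R : Ω => (1 + ‖R‖)) P := (moments1 P hP).integrable one_le_three_ennreal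
lemma moments3 {Ω : Type*} [NormedAddCommGroup Ω] [MeasurableSpace Ω]
    (P : Measure Ω) [IsProbabilityMeasure P] (hP : MemLp id 3 P) :
    Integrable (fun R : Ω => (1 + ‖R‖) ^ 3) P := by
  have hM' : MemLp (fun R : Ω => 1 + ‖R‖) ((3 : ℕ) : ENNReal) P := by
      rw [Nat.cast_ofNat]
      exact moments1 P hP
  have := hM'.integrable_norm_pow three_ne_zero
  refine this.congr (Filter.Eventually.of_forall fun R => ?_)
  have : 0 ≤ 1 + ‖R‖ := by positivity
  simp [abs_of_nonneg this]

lemma growth_bounds {E : Type*} [NormedAddCommGroup E] [NormedSpace ℝ E]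
    (f : E → ℝ) (hf : Differentiable ℝ f) (Lip : ℝ)
    (hLip : ∀ W W', ‖fderiv ℝ f W - fderiv ℝ f W'‖ ≤ Lip * ‖W - W'‖) :
    ∃ C D : ℝ, 0 ≤ C ∧ 0 ≤ D ∧ (∀ x, ‖fderiv ℝ f x‖ ≤ C * (1 + ‖x‖)) ∧
      (∀ x, ‖f x‖ ≤ D * (1 + ‖x‖) ^ 2) := by
  -- growth
  obtain ⟨C, hC⟩ : ∃ C : ℝ, C = ‖fderiv ℝ f 0‖ + |Lip| := ⟨_, rfl⟩
  have hC0 : 0 ≤ C := by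
    rw [hC]
    positivity
  have hfd : ∀ x, ‖fderiv ℝ f x‖ ≤ C * (1 + ‖x‖) := by
    intro x
    have h1 := hLip x 0
    rw [sub_zero] at h1
    have h2 : ‖fderiv ℝ f x‖ ≤ ‖fderiv ℝ f 0‖ + ‖fderiv ℝ f x - fderiv ℝ f 0‖ :=
      norm_le_insert' _ _
    have h3 : Lip * ‖x‖ ≤ |Lip| * ‖x‖ := by
      gcongr
      exact le_abs_self _
    have h4 : 0 ≤ ‖fderiv ℝ f 0‖ * ‖x‖ := by positivity
    have h5 := abs_nonneg Lip
    rw [hC]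
    nlinarith
  obtain ⟨D, hD⟩ : ∃ D : ℝ, D = |f 0| + C := ⟨_, rfl⟩
  have hD0 : 0 ≤ D := by
    rw [hD]
    positivity
  have hfb : ∀ x, ‖f x‖ ≤ D * (1 + ‖x‖) ^ 2 := by
    intro x
    have h1 : ‖f x - f 0‖ ≤ C * (1 + ‖x‖) * ‖x - 0‖ := by
      refine (convex_closedBall (0 : E) ‖x‖).norm_image_sub_le_of_norm_fderiv_le (𝕜 := ℝ)
        (fun y _ => hf y) (fun y hy => (hfd y).trans ?_) (by simp) (by simp)
      have : ‖y‖ ≤ ‖x‖ := by simpa using hy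
      gcongr
    rw [sub_zero] at h1
    have h2 : ‖f x‖ ≤ ‖f 0‖ + ‖f x - f 0‖ := norm_le_insert' _ _
    have h3 : ‖f 0‖ = |f 0| := Real.norm_eq_abs _
    have h4 : |f 0| * 1 ≤ |f 0| * (1 + ‖x‖) ^ 2 := by
      gcongr
      nlinarith [norm_nonneg x]
    have h5 : C * (1 + ‖x‖) * ‖x‖ ≤ C * (1 + ‖x‖) ^ 2 := by
      rw [mul_assoc]
      gcongr
      nlinarith [norm_nonneg x]
    rw [hD]
    nlinarith
  exact ⟨C, D, hC0, hD0, hfd, hfb⟩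

set_option maxHeartbeats 400000 in
lemma smoothing_core {E Ω : Type*} [NormedAddCommGroup E] [NormedSpace ℝ E]
    [NormedAddCommGroup Ω] [NormedSpace ℝ Ω] [MeasurableSpace Ω] [BorelSpace Ω]
    [SecondCountableTopology Ω] (P : Measure Ω) [IsProbabilityMeasure P]
    (hP : MemLp id 3 P) (T : Ω →L[ℝ] E) (f : E → ℝ) (hf : Differentiable ℝ f) (Lip : ℝ)
    (hLip : ∀ W W', ‖fderiv ℝ f W - fderiv ℝ f W'‖ ≤ Lip * ‖W - W'‖) (W : E) :
    HasFDerivAt (fun w => ∫ R, f (w + T R) ∂P) (∫ R, fderiv ℝ f (W + T R) ∂P) W ∧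
    Integrable (fun R => fderiv ℝ f (W + T R)) P ∧
    Integrable (fun R => f (W + T R)) P ∧
    ∀ φ : Ω →L[ℝ] ℝ, Integrable (fun R => f (W + T R) * φ R) P := by
  obtain ⟨C, D, hC0, hD0, hfd, hfb⟩ := growth_bounds f hf Lip hLip
  have hx : ∀ w R, 1 + ‖w + T R‖ ≤ (1 + ‖w‖ + ‖T‖) * (1 + ‖R‖) := by
    intro w R
    have h1 := norm_add_le w (T R)
    have h2 := T.le_opNorm R
    have h3 : 0 ≤ ‖w‖ * ‖R‖ := by positivity
    have h4 := norm_nonneg T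
    have h5 := norm_nonneg R
    nlinarith
  have hcf' : Continuous (fderiv ℝ f) := by
    have : LipschitzWith (Real.toNNReal Lip) (fderiv ℝ f) := by
      refine LipschitzWith.of_dist_le_mul fun x y => ?_
      rw [dist_eq_norm, dist_eq_norm]
      refine (hLip x y).trans ?_
      gcongr
      exact Real.le_coe_toNNReal Lip
    exact this.continuous
  have hcT : ∀ w, Continuous (fun R => w + T R) := fun w => by fun_prop
  -- moments
  have m3 := moments3 P hP
  have m1 := moments2 P hP
  have hp : ∀ R : Ω, (1 + ‖R‖) ^ 2 ≤ (1 + ‖R‖) ^ 3 := fun R =>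
    pow_le_pow_right₀ (by linarith [norm_nonneg R]) (by norm_num)
  have bf : ∀ R, ‖f (W + T R)‖ ≤ D * (1 + ‖W‖ + ‖T‖) ^ 2 * (1 + ‖R‖) ^ 2 := by
    intro R
    refine (hfb _).trans ?_
    rw [mul_assoc, ← mul_pow]
    gcongr
    exact hx W R
  have If : Integrable (fun R => f (W + T R)) P := by
    refine (m3.const_mul (D * (1 + ‖W‖ + ‖T‖) ^ 2)).mono'
      ((hf.continuous.comp (hcT W)).aestronglyMeasurable)
      (Filter.Eventually.of_forall fun R => (bf R).trans ?_)
    exact mul_le_mul_of_nonneg_left (hp R) (by positivity)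
  have mf' : AEStronglyMeasurable (fun R => fderiv ℝ f (W + T R)) P :=
    (hcf'.comp (hcT W)).aestronglyMeasurable
  have bf' : ∀ w ∈ Metric.ball W 1, ∀ R,
      ‖fderiv ℝ f (w + T R)‖ ≤ C * (1 + (‖W‖ + 1) + ‖T‖) * (1 + ‖R‖) := by
    intro w hw R
    have hw' : ‖w‖ ≤ ‖W‖ + 1 := by
      have h1 : ‖w - W‖ < 1 := by simpa [dist_eq_norm] using hw
      have h2 : ‖w‖ ≤ ‖W‖ + ‖w - W‖ := norm_le_insert' _ _
      linarith
    refine (hfd _).trans ?_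
    rw [mul_assoc]
    gcongr
    refine (hx w R).trans ?_
    gcongr
  have Ib := m1.const_mul (C * (1 + (‖W‖ + 1) + ‖T‖))
  refine ⟨?_, ?_, If, ?_⟩
  · refine hasFDerivAt_integral_of_dominated_of_fderiv_le (𝕜 := ℝ)
      (F := fun w R => f (w + T R)) (F' := fun w R => fderiv ℝ f (w + T R))
      (Metric.ball_mem_nhds W one_pos)
      (Filter.Eventually.of_forall fun w => (hf.continuous.comp (hcT w)).aestronglyMeasurable)
      If mf' (Filter.Eventually.of_forall fun R w hw => bf' w hw R) Ib
      (Filter.Eventually.of_forall fun R w _ => ?_)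
    have := (hf (w + T R)).hasFDerivAt
    exact (hasFDerivAt_comp_add_right (T R)).2 this
  · exact Ib.mono' mf' (Filter.Eventually.of_forall fun R =>
      bf' W (Metric.mem_ball_self one_pos) R)
  · intro φ
    refine (m3.const_mul (D * (1 + ‖W‖ + ‖T‖) ^ 2 * ‖φ‖)).mono'
      (((hf.continuous.comp (hcT W)).mul φ.continuous).aestronglyMeasurable)
      (Filter.Eventually.of_forall fun R => ?_)
    rw [norm_mul]
    have h1 : ‖φ R‖ ≤ ‖φ‖ * (1 + ‖R‖) := by
      refine (φ.le_opNorm R).trans ?_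
      gcongr
      linarith
    calc ‖f (W + T R)‖ * ‖φ R‖
        ≤ (D * (1 + ‖W‖ + ‖T‖) ^ 2 * (1 + ‖R‖) ^ 2) * (‖φ‖ * (1 + ‖R‖)) := by
          gcongr
          exact bf R
      _ = _ := by ring

/-- The scaled perturbation as a linear map. -/
def perturbLin (μ : ℝ) (A : (ℓ : Fin L) → Matrix (Fin (din ℓ)) (Fin (r ℓ)) ℝ) :
    ((ℓ : Fin L) → Fin (dout ℓ) → Fin (r ℓ) → ℝ) →ₗ[ℝ]
      ((ℓ : Fin L) → Matrix (Fin (dout ℓ)) (Fin (din ℓ)) ℝ) where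
  toFun R := μ • perturbA A R
  map_add' R S := by
    ext ℓ i j
    simp [perturbA, Matrix.mul_apply, add_mul, Finset.sum_add_distrib, mul_add]
  map_smul' c R := by
    ext ℓ i j
    simp only [perturbA, Matrix.mul_apply, Pi.smul_apply, Matrix.smul_apply, smul_eq_mul,
      Matrix.of_apply, RingHom.id_apply, Finset.mul_sum]
    refine Finset.sum_congr rfl fun k _ => ?_
    ring

lemma perturbLin_single (μ : ℝ) (A : (ℓ : Fin L) → Matrix (Fin (din ℓ)) (Fin (r ℓ)) ℝ)
    (ℓ : Fin L) (i : Fin (dout ℓ)) (k : Fin (r ℓ)) :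
    perturbLin (dout := dout) μ A (Pi.single ℓ (Pi.single i (Pi.single k (1 : ℝ))))
      = ∑ j, (μ * A ℓ j k) • Pi.single ℓ (Matrix.single i j (1 : ℝ)) := by
  ext ℓ' a b
  simp only [perturbLin, LinearMap.coe_mk, AddHom.coe_mk, perturbA, Pi.smul_apply,
    Matrix.smul_apply, Matrix.mul_apply, Matrix.of_apply, Finset.sum_apply, Matrix.sum_apply]
  by_cases h : ℓ' = ℓ
  · subst h
    by_cases ha : a = i
    · subst ha
      simp [Pi.single_apply, Matrix.single_apply]
    · simp [Matrix.single_apply, ha, Ne.symm ha]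
  · simp [Pi.single_eq_of_ne h]

/-- the subspace-smoothed objective is differentiable at `W` and
`∇_{W_ℓ} f_{μ,A}(W) · A_ℓA_ℓᵀ = (1/μ)·E_R[f(W + μΔ(R))·R_ℓA_ℓᵀ]`. -/
theorem agzo_subspace_smoothing_one_sided
    (L : ℕ) (hL : 0 < L) (dout din r : Fin L → ℕ)
    (hdout : ∀ ℓ, 0 < dout ℓ) (hdin : ∀ ℓ, 0 < din ℓ) (hr : ∀ ℓ, 0 < r ℓ)
    (A : (ℓ : Fin L) → Matrix (Fin (din ℓ)) (Fin (r ℓ)) ℝ)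
    (hA : ∀ ℓ, (A ℓ)ᵀ * A ℓ = 1)
    (f : ((ℓ : Fin L) → Matrix (Fin (dout ℓ)) (Fin (din ℓ)) ℝ) → ℝ)
    (hf : Differentiable ℝ f) (Lip : ℝ)
    (hLip : ∀ W W', ‖fderiv ℝ f W - fderiv ℝ f W'‖ ≤ Lip * ‖W - W'‖)
    (μ : ℝ) (hμ : 0 < μ)
    (W : (ℓ : Fin L) → Matrix (Fin (dout ℓ)) (Fin (din ℓ)) ℝ) :
    DifferentiableAt ℝ (smoothedA f μ A) W ∧
    ∀ ℓ, gradBlock (smoothedA f μ A) W ℓ * (A ℓ * (A ℓ)ᵀ) =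
      μ⁻¹ • matExp (gaussBlocks dout r)
        (fun R => f (W + μ • perturbA A R) • (Matrix.of (R ℓ) * (A ℓ)ᵀ)) := by
  let T : ((ℓ : Fin L) → Fin (dout ℓ) → Fin (r ℓ) → ℝ) →L[ℝ]
      ((ℓ : Fin L) → Matrix (Fin (dout ℓ)) (Fin (din ℓ)) ℝ) :=
    LinearMap.toContinuousLinearMap (perturbLin μ A)
  have hT : ∀ R, μ • perturbA A R = T R := fun R => rfl
  obtain ⟨hd, I1, I2, I3⟩ := smoothing_core (gaussBlocks dout r) (memLp_gaussBlocks dout r) T f hf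
    Lip hLip W
  have hd' : HasFDerivAt (smoothedA f μ A) (∫ R, fderiv ℝ f (W + T R) ∂(gaussBlocks dout r)) W := hd
  refine ⟨hd'.differentiableAt, fun ℓ => ?_⟩
  have I4 : ∀ i k, Integrable (fun R => f (W + T R) * R ℓ i k) (gaussBlocks dout r) := by
    intro i k
    let φ : ((ℓ : Fin L) → Fin (dout ℓ) → Fin (r ℓ) → ℝ) →ₗ[ℝ] ℝ :=
      { toFun := fun R => R ℓ i k
        map_add' := fun _ _ => rfl
        map_smul' := fun _ _ => rfl }
    exact I3 (LinearMap.toContinuousLinearMap φ)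
  have stein : ∀ i k, ∫ R, f (W + T R) * R ℓ i k ∂(gaussBlocks dout r)
      = ∑ j, (μ * A ℓ j k) * fderiv ℝ (smoothedA f μ A) W
          (Pi.single ℓ (Matrix.single i j (1 : ℝ))) := by
    intro i k
    set e : (ℓ : Fin L) → Fin (dout ℓ) → Fin (r ℓ) → ℝ :=
      Pi.single ℓ (Pi.single i (Pi.single k (1 : ℝ))) with he
    have h1 := stein_gaussBlocks dout r ℓ i k (fun R => f (W + T R))
      (fun R => fderiv ℝ f (W + T R) (T e)) ?_ I2 (I1.apply_continuousLinearMap _) (I4 i k)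
    · rw [h1, ContinuousLinearMap.integral_apply I1 (T e) |>.symm, hd'.fderiv]
      have : T e = _ := perturbLin_single μ A ℓ i k
      rw [this, map_sum]
      simp only [map_smul, smul_eq_mul]
    · intro R
      have h2 : HasDerivAt (fun t : ℝ => W + T (R + t • e)) (T e) 0 := by
        have h3 : HasDerivAt (fun t : ℝ => (W + T R) + t • T e) ((1 : ℝ) • T e) 0 :=
          ((hasDerivAt_id (0 : ℝ)).smul_const (T e)).const_add _
        rw [one_smul] at h3
        refine h3.congr_of_eventuallyEq (Filter.Eventually.of_forall fun t => ?_)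
        simp only [map_add, map_smul]
        rw [add_assoc]
      have h4 : HasFDerivAt f (fderiv ℝ f (W + T R)) (W + T (R + (0 : ℝ) • e)) := by
        have h5 : W + T (R + (0 : ℝ) • e) = W + T R := by rw [zero_smul, add_zero]
        rw [h5]
        exact (hf _).hasFDerivAt
      exact h4.comp_hasDerivAt (0 : ℝ) h2
  ext i j
  simp only [hT]
  have rhs : ∫ R, (f (W + T R) • (Matrix.of (R ℓ) * (A ℓ)ᵀ)) i j ∂(gaussBlocks dout r)
      = ∑ k, A ℓ j k * ∫ R, f (W + T R) * R ℓ i k ∂(gaussBlocks dout r) := by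
    simp_rw [← integral_const_mul]
    rw [← integral_finsetSum _ (fun k _ => (I4 i k).const_mul _)]
    refine integral_congr_ae (Filter.Eventually.of_forall fun R => ?_)
    simp only [Matrix.smul_apply, Matrix.mul_apply, Matrix.of_apply, Matrix.transpose_apply,
      smul_eq_mul, Finset.mul_sum]
    refine Finset.sum_congr rfl fun k _ => ?_
    ring
  have rhs' : (μ⁻¹ • matExp (gaussBlocks dout r)
        (fun R => f (W + T R) • (Matrix.of (R ℓ) * (A ℓ)ᵀ))) i j
      = μ⁻¹ * ∫ R, (f (W + T R) • (Matrix.of (R ℓ) * (A ℓ)ᵀ)) i j ∂(gaussBlocks dout r) := rfl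
  rw [rhs', rhs]
  simp only [stein, gradBlock, Matrix.mul_apply, Matrix.of_apply, Matrix.transpose_apply,
    smul_eq_mul, Finset.mul_sum]
  rw [Finset.sum_comm]
  refine Finset.sum_congr rfl fun k _ => Finset.sum_congr rfl fun j' _ => ?_
  field_simp

end
end

section
/- Let m, n, r be positive integers, let G ∈ ℝ^{m×n} be nonzero, let A ∈ ℝ^{n×r} have orthonormal columns (AᵀA = I_r), and let R ∈ ℝ^{m×r} have i.i.d. standard Gaussian entries. Then E_R[ |⟨R, GA⟩_F| / (‖R‖_F · ‖G‖_F) ] = β_{mr} · ‖GA‖_F / ‖G‖_F, where the integrand is defined to be 0 when R = 0. Consequently, the expected cosine similarity between the noiseless AGZO estimator Ĝ := ⟨G, RAᵀ⟩_F · RAᵀ and G equals β_{mr} · ‖GA‖_F / ‖G‖_F. -/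
open MeasureTheory ProbabilityTheory Matrix Real

attribute [local instance] Matrix.frobeniusNormedAddCommGroup Matrix.frobeniusNormedSpace

noncomputable section

/-- Frobenius inner product `⟨X,Y⟩_F = tr(XᵀY)`. -/
def frobInner {ι κ : Type*} [Fintype ι] [Fintype κ]
    (X Y : Matrix ι κ ℝ) : ℝ := (Xᵀ * Y).trace

/-- The product of standard Gaussian measures over all entries of an `m × r` matrix
(i.i.d. standard Gaussian entries). -/
def gaussMat (m r : ℕ) : Measure (Fin m → Fin r → ℝ) :=
  Measure.pi fun _ => Measure.pi fun _ => gaussianReal 0 1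

/-- `β_D = Γ(D/2)/(√π·Γ((D+1)/2))`. -/
def beta (D : ℕ) : ℝ :=
  Real.Gamma (D / 2) / (Real.sqrt π * Real.Gamma ((D + 1) / 2))

def vecE {m r : ℕ} (ω : Fin m → Fin r → ℝ) : EuclideanSpace ℝ (Fin m × Fin r) :=
  WithLp.toLp 2 (fun p => ω p.1 p.2)

lemma measurable_vecE {m r : ℕ} : Measurable (vecE (m := m) (r := r)) := by
  unfold vecE
  fun_prop

lemma map_gaussMat (m r : ℕ) :
    (gaussMat m r).map vecE = stdGaussian (EuclideanSpace ℝ (Fin m × Fin r)) := by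
  rw [← map_pi_eq_stdGaussian]
  have h := Measure.infinitePi_map_curry_symm (ι := Fin m) (κ := Fin r) (X := ℝ)
    (fun _ _ => gaussianReal 0 1)
  simp only [Measure.infinitePi_eq_pi] at h
  rw [← h, Measure.map_map (by fun_prop) (by fun_prop)]
  rfl

lemma stdGaussian_density (ι : Type*) [Fintype ι] :
    stdGaussian (EuclideanSpace ℝ ι) = (volume : Measure (EuclideanSpace ℝ ι)).withDensity
      (fun x => ENNReal.ofReal ((2 * π) ^ (-(Fintype.card ι / 2 : ℝ)) * rexp (-(1/2) * ‖x‖ ^ 2))) := by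
  have hint : Integrable (fun x : EuclideanSpace ℝ ι => rexp (-(1/2) * ‖x‖ ^ 2)) := by
    by_contra h
    have h1 := GaussianFourier.integral_rexp_neg_mul_sq_norm (V := EuclideanSpace ℝ ι) (b := 1/2) (by norm_num)
    rw [integral_undef h] at h1
    have : 0 < (π / (1/2)) ^ (Module.finrank ℝ (EuclideanSpace ℝ ι) / 2 : ℝ) := by positivity
    linarith
  have hfin : IsFiniteMeasure ((volume : Measure (EuclideanSpace ℝ ι)).withDensity
      (fun x => ENNReal.ofReal ((2 * π) ^ (-(Fintype.card ι / 2 : ℝ)) * rexp (-(1/2) * ‖x‖ ^ 2)))) :=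
    isFiniteMeasure_withDensity_ofReal (hint.const_mul _).2
  apply Measure.ext_of_charFun
  ext t
  rw [charFun_stdGaussian, charFun_apply, integral_withDensity_eq_integral_toReal_smul (by fun_prop) (by simp)]
  have h2 := GaussianFourier.integral_cexp_neg_mul_sq_norm_add_of_euclideanSpace (b := 1/2) (by norm_num) Complex.I t
  have h3 : ∀ x : EuclideanSpace ℝ ι, (ENNReal.ofReal ((2 * π) ^ (-(Fintype.card ι / 2 : ℝ)) * rexp (-(1/2) * ‖x‖ ^ 2))).toReal • Complex.exp (inner ℝ x t * Complex.I)
     = (((2 * π) ^ (-(Fintype.card ι / 2 : ℝ)) : ℝ) : ℂ) * Complex.exp (- (1/2) * ‖x‖ ^ 2 + Complex.I * inner ℝ t x) := by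
    intro x
    rw [ENNReal.toReal_ofReal (by positivity), Complex.exp_add, real_inner_comm]
    simp only [Complex.real_smul]
    push_cast
    ring_nf
  simp_rw [h3]
  rw [integral_const_mul, h2, ← mul_assoc]
  have h4 : (((2 * π) ^ (-(Fintype.card ι / 2 : ℝ)) : ℝ) : ℂ) * (π / (1/2)) ^ (Fintype.card ι / 2 : ℂ) = 1 := by
    have : ((π:ℂ) / (1/2)) ^ (Fintype.card ι / 2 : ℂ) = (((2 * π) ^ ((Fintype.card ι / 2 : ℝ)) : ℝ) : ℂ) := by
      rw [Complex.ofReal_cpow (by positivity)]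
      push_cast
      congr 1
      ring
    rw [this, ← Complex.ofReal_mul, ← Real.rpow_add (by positivity)]
    simp
  rw [h4, one_mul]
  congr 1
  simp
  ring

lemma integral_stdGaussian (ι : Type*) [Fintype ι] (f : EuclideanSpace ℝ ι → ℝ) :
    ∫ x, f x ∂(stdGaussian (EuclideanSpace ℝ ι)) =
      (2 * π) ^ (-(Fintype.card ι / 2 : ℝ)) * ∫ x, f x * rexp (-(1/2) * ‖x‖ ^ 2) := by
  rw [stdGaussian_density, integral_withDensity_eq_integral_toReal_smul (by fun_prop) (by simp),
    ← integral_const_mul]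
  congr 1; ext x
  rw [ENNReal.toReal_ofReal (by positivity), smul_eq_mul]
  ring

lemma integral_polar {E : Type*} [NormedAddCommGroup E] [NormedSpace ℝ E] [Nontrivial E]
    [FiniteDimensional ℝ E] [MeasurableSpace E] [BorelSpace E] (μ : Measure E) [μ.IsAddHaarMeasure]
    (h : E → ℝ) (g : ℝ → ℝ) :
    ∫ x, h (‖x‖⁻¹ • x) * g ‖x‖ ∂μ = (∫ u, h u.1 ∂μ.toSphere) *
      ∫ y in Set.Ioi (0 : ℝ), y ^ (Module.finrank ℝ E - 1) * g y := 
  calc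
    ∫ x, h (‖x‖⁻¹ • x) * g ‖x‖ ∂μ
      = ∫ x : ({(0)}ᶜ : Set E), h (‖x.1‖⁻¹ • x.1) * g ‖x.1‖ ∂(μ.comap (↑)) := by
      rw [integral_subtype_comap (measurableSet_singleton _).compl
        fun x ↦ h (‖x‖⁻¹ • x) * g ‖x‖, restrict_compl_singleton]
    _ = ∫ x, h x.1.1 * g x.2.1 ∂μ.toSphere.prod (.volumeIoiPow (Module.finrank ℝ E - 1)) := by
      simpa using μ.measurePreserving_homeomorphUnitSphereProd.integral_comp
        (Homeomorph.measurableEmbedding _) (fun x => h x.1.1 * g x.2.1)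
    _ = (∫ u, h u.1 ∂μ.toSphere) *
        ∫ x : Set.Ioi (0 : ℝ), g x ∂.volumeIoiPow (Module.finrank ℝ E - 1) :=
      integral_prod_mul (fun u : Metric.sphere (0:E) 1 => h u.1) (fun x : Set.Ioi (0:ℝ) => g x.1)
    _ = _ := by
      simp only [Measure.volumeIoiPow, ENNReal.ofReal]
      rw [integral_withDensity_eq_integral_smul,
        integral_subtype_comap measurableSet_Ioi
          fun a ↦ Real.toNNReal (a ^ (Module.finrank ℝ E - 1)) • g a,
        setIntegral_congr_fun measurableSet_Ioi fun x hx ↦ ?_]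
      · rw [NNReal.smul_def, Real.coe_toNNReal _ (pow_nonneg hx.out.le _), smul_eq_mul]
      · exact (measurable_subtype_coe.pow_const _).real_toNNReal

lemma integral_pow_gauss (k : ℕ) :
    ∫ y in Set.Ioi (0 : ℝ), y ^ k * rexp (-(1/2) * y ^ 2) =
      2 ^ (((k:ℝ) + 1) / 2) * (1/2) * Real.Gamma (((k:ℝ) + 1) / 2) := by
  have := integral_rpow_mul_exp_neg_mul_rpow (p := 2) (q := k) (b := 1/2) (by norm_num)
    (by have := k.cast_nonneg (α := ℝ); linarith) (by norm_num)
  simp only [Real.rpow_natCast, Real.rpow_ofNat] at this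
  rw [this]
  congr 2
  rw [one_div, Real.inv_rpow (by norm_num), ← Real.rpow_neg (by norm_num)]
  congr 1
  ring

lemma integral_abs_std : ∫ x, |x| ∂(gaussianReal 0 1) = √(2 / π) := by
  rw [integral_gaussianReal_eq_integral_smul (by simp)]
  have h1 : ∀ x : ℝ, gaussianPDFReal 0 1 x • |x| =
     (fun y => (√(2 * π))⁻¹ * (y ^ 1 * rexp (-(1/2) * y ^ 2))) |x| := by
    intro x
    simp [gaussianPDFReal]
    ring_nf
  simp_rw [h1]
  rw [integral_comp_abs (f := fun y => (√(2 * π))⁻¹ * (y ^ 1 * rexp (-(1/2) * y ^ 2))),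
    integral_const_mul, integral_pow_gauss]
  norm_num
  field_simp
  norm_num

lemma integral_abs_inner {ι : Type*} [Fintype ι] (v : EuclideanSpace ℝ ι) :
    ∫ x, |inner ℝ v x| ∂(stdGaussian (EuclideanSpace ℝ ι)) = ‖v‖ * √(2 / π) := by
  have h1 : (stdGaussian (EuclideanSpace ℝ ι)).map (innerSL ℝ v)
      = (gaussianReal 0 1).map (fun x => ‖v‖ * x) := by
    rw [IsGaussian.map_eq_gaussianReal, integral_strongDual_stdGaussian,
      variance_dual_stdGaussian, gaussianReal_map_const_mul]
    simp
    congr 1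
    ext
    simp
  have h2 : ∫ x, |inner ℝ v x| ∂(stdGaussian (EuclideanSpace ℝ ι)) =
      ∫ y, |y| ∂((stdGaussian (EuclideanSpace ℝ ι)).map (innerSL ℝ v)) := by
    rw [integral_map (by fun_prop) (by fun_prop)]
    rfl
  rw [h2, h1, integral_map (by fun_prop) (by fun_prop)]
  simp_rw [abs_mul, abs_norm]
  rw [integral_const_mul, integral_abs_std]

lemma integral_abs_cosine {ι : Type*} [Fintype ι] [Nonempty ι] (v : EuclideanSpace ℝ ι) :
    ∫ x, |inner ℝ v x| / ‖x‖ ∂(stdGaussian (EuclideanSpace ℝ ι)) =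
      Real.Gamma (Fintype.card ι / 2) / (√π * Real.Gamma ((Fintype.card ι + 1) / 2)) * ‖v‖ := by
  have h1 := integral_abs_inner v
  rw [integral_stdGaussian] at h1 ⊢
  have e1 : ∀ x : EuclideanSpace ℝ ι, |inner ℝ v x| * rexp (-(1/2) * ‖x‖ ^ 2) =
     (fun u => |inner ℝ v u|) (‖x‖⁻¹ • x) * (fun y => y * rexp (-(1/2) * y ^ 2)) ‖x‖ := by
    intro x
    rcases eq_or_ne x 0 with rfl | hx
    · simp
    · have : ‖x‖ ≠ 0 := by simpa
      simp only [inner_smul_right, abs_mul, abs_inv, abs_norm]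
      field_simp
  have e2 : ∀ x : EuclideanSpace ℝ ι, |inner ℝ v x| / ‖x‖ * rexp (-(1/2) * ‖x‖ ^ 2) =
     (fun u => |inner ℝ v u|) (‖x‖⁻¹ • x) * (fun y => rexp (-(1/2) * y ^ 2)) ‖x‖ := by
    intro x
    simp only [inner_smul_right, abs_mul, abs_inv, abs_norm]
    ring
  rw [integral_congr_ae (Filter.Eventually.of_forall e1),
    integral_polar volume (fun u => |inner ℝ v u|) (fun y => y * rexp (-(1/2) * y ^ 2))] at h1
  rw [integral_congr_ae (Filter.Eventually.of_forall e2),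
    integral_polar volume (fun u => |inner ℝ v u|) (fun y => rexp (-(1/2) * y ^ 2))]
  obtain ⟨k, hk⟩ : ∃ k, Fintype.card ι = k + 1 := Nat.exists_eq_succ_of_ne_zero Fintype.card_ne_zero
  simp only [finrank_euclideanSpace, hk, Nat.add_sub_cancel, ← mul_assoc, ← pow_succ] at h1 ⊢
  rw [integral_pow_gauss] at h1 ⊢
  set S := ∫ u : Metric.sphere (0 : EuclideanSpace ℝ ι) 1, |inner ℝ v u.1| ∂(volume : Measure (EuclideanSpace ℝ ι)).toSphere
  set c := (2 * π) ^ (-(((k + 1 : ℕ) : ℝ) / 2))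
  push_cast at h1 ⊢
  have hg : 0 < Real.Gamma (((k:ℝ) + 1 + 1) / 2) := Real.Gamma_pos_of_pos (by positivity)
  have hp : (2:ℝ) ^ (((k:ℝ) + 1 + 1) / 2) = 2 ^ (((k:ℝ) + 1) / 2) * √2 := by
    rw [Real.sqrt_eq_rpow, ← Real.rpow_add (by norm_num)]
    congr 1; ring
  rw [hp, Real.sqrt_div (by norm_num)] at h1
  have hs : 0 < √π := by positivity
  have h2 : 0 < √2 := by positivity
  field_simp at h1 ⊢
  linear_combination h1

lemma norm_sq_frob {m r : ℕ} (X : Matrix (Fin m) (Fin r) ℝ) : ‖X‖ ^ 2 = frobInner X X := by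
  rw [Matrix.frobenius_norm_def, ← Real.rpow_natCast, ← Real.rpow_mul (by positivity)]
  norm_num
  simp only [frobInner, Matrix.trace, Matrix.mul_apply, Matrix.diag, Matrix.transpose_apply]
  rw [Finset.sum_comm]
  simp [sq]

lemma frobInner_eq_inner {m r : ℕ} (X Y : Matrix (Fin m) (Fin r) ℝ) :
    frobInner X Y = inner ℝ (vecE Y) (vecE X) := by
  simp only [frobInner, Matrix.trace, Matrix.mul_apply, Matrix.diag, Matrix.transpose_apply]
  rw [Finset.sum_comm]
  simp [vecE, PiLp.inner_apply, Fintype.sum_prod_type]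

lemma norm_frob {m r : ℕ} (X : Matrix (Fin m) (Fin r) ℝ) : ‖X‖ = ‖vecE X‖ := by
  rw [← sq_eq_sq₀ (norm_nonneg _) (norm_nonneg _), norm_sq_frob, frobInner_eq_inner,
    real_inner_self_eq_norm_sq]

lemma norm_mul_transpose {m n r : ℕ} (R : Matrix (Fin m) (Fin r) ℝ)
    (A : Matrix (Fin n) (Fin r) ℝ) (hA : Aᵀ * A = 1) : ‖R * Aᵀ‖ = ‖R‖ := by
  rw [← sq_eq_sq₀ (norm_nonneg _) (norm_nonneg _), norm_sq_frob, norm_sq_frob]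
  unfold frobInner
  rw [Matrix.transpose_mul, Matrix.transpose_transpose, Matrix.mul_assoc, Matrix.trace_mul_comm,
    Matrix.mul_assoc, Matrix.mul_assoc, hA, Matrix.mul_one]

lemma pointwise {m n r : ℕ} (G : Matrix (Fin m) (Fin n) ℝ) (R : Matrix (Fin m) (Fin r) ℝ)
    (A : Matrix (Fin n) (Fin r) ℝ) (hA : Aᵀ * A = 1) :
    frobInner (frobInner G (R * Aᵀ) • (R * Aᵀ)) G / (‖frobInner G (R * Aᵀ) • (R * Aᵀ)‖ * ‖G‖)
      = |frobInner R (G * A)| / (‖R‖ * ‖G‖) := by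
  have h1 : frobInner G (R * Aᵀ) = frobInner R (G * A) := by
    unfold frobInner
    rw [← Matrix.mul_assoc, Matrix.trace_mul_comm, ← Matrix.trace_transpose]
    simp [Matrix.transpose_mul, Matrix.mul_assoc]
  have h2 : frobInner (frobInner G (R * Aᵀ) • (R * Aᵀ)) G = frobInner R (G * A) ^ 2 := by
    rw [← h1]
    generalize hX : R * Aᵀ = X
    have h3 : ∀ c : ℝ, frobInner (c • X) G = c * frobInner X G := by
      intro c
      unfold frobInner
      rw [Matrix.transpose_smul, Matrix.smul_mul, Matrix.trace_smul, smul_eq_mul]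
    have h4 : frobInner X G = frobInner G X := by
      unfold frobInner
      rw [← Matrix.trace_transpose]
      simp [Matrix.transpose_mul]
    rw [h3, h4, sq]
  rw [h2, h1, norm_smul, norm_mul_transpose R A hA, Real.norm_eq_abs, ← sq_abs]
  rcases eq_or_ne (frobInner R (G * A)) 0 with h | h
  · simp [h]
  · have : |frobInner R (G * A)| ≠ 0 := by simpa
    rw [sq, mul_assoc, mul_div_mul_left _ _ this]

/-- expected cosine similarity of the noiseless AGZO estimator.
`E_R[|⟨R, GA⟩_F|/(‖R‖_F‖G‖_F)] = β_{mr}·‖GA‖_F/‖G‖_F`, and consequently the expected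
cosine similarity between `Ĝ = ⟨G,RAᵀ⟩_F·RAᵀ` and `G` equals `β_{mr}·‖GA‖_F/‖G‖_F`. -/
theorem agzo_expected_cosine (m n r : ℕ) (hm : 0 < m) (hn : 0 < n) (hr : 0 < r)
    (G : Matrix (Fin m) (Fin n) ℝ) (hG : G ≠ 0)
    (A : Matrix (Fin n) (Fin r) ℝ) (hA : Aᵀ * A = 1) :
    (∫ ω, |frobInner (Matrix.of ω) (G * A)| / (‖Matrix.of (m := Fin m) (n := Fin r) ω‖ * ‖G‖)
        ∂(gaussMat m r))
      = _root_.beta (m * r) * ‖G * A‖ / ‖G‖ ∧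
    (∫ ω, frobInner (frobInner G (Matrix.of ω * Aᵀ) • (Matrix.of ω * Aᵀ)) G
          / (‖frobInner G (Matrix.of ω * Aᵀ) • (Matrix.of ω * Aᵀ)‖ * ‖G‖)
        ∂(gaussMat m r))
      = _root_.beta (m * r) * ‖G * A‖ / ‖G‖ := by
  have h1 : (∫ ω, |frobInner (Matrix.of ω) (G * A)|
        / (‖Matrix.of (m := Fin m) (n := Fin r) ω‖ * ‖G‖) ∂(gaussMat m r))
      = _root_.beta (m * r) * ‖G * A‖ / ‖G‖ := by
    have : Nonempty (Fin m × Fin r) := ⟨(⟨0, hm⟩, ⟨0, hr⟩)⟩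
    have key := integral_abs_cosine (vecE (G * A))
    rw [← map_gaussMat, integral_map measurable_vecE.aemeasurable
      (by apply Measurable.aestronglyMeasurable; fun_prop)] at key
    have e : ∀ ω : Fin m → Fin r → ℝ, |frobInner (Matrix.of ω) (G * A)|
        / (‖Matrix.of (m := Fin m) (n := Fin r) ω‖ * ‖G‖)
        = |inner ℝ (vecE (G * A)) (vecE ω)| / ‖vecE ω‖ / ‖G‖ := by
      intro ω
      rw [frobInner_eq_inner, norm_frob (Matrix.of ω), div_div]
      rfl
    simp_rw [e]
    rw [integral_div, key, ← norm_frob]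
    simp [_root_.beta]
  refine ⟨h1, ?_⟩
  rw [← h1]
  congr 1
  ext ω
  exact pointwise G (Matrix.of ω) A hA

end
end
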